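/- arXiv:2404.11837 — 2 statements merged into one kernel-verified Lean document; each statement's English description precedes it below -/
import Mathlib

section
/- Let Δ be a finite abstract simplicial complex on the vertex set {1,…,N} that is pure of dimension d, i.e. every maximal face has exactly d elements; write Δ_j for the set of j-element faces. Let v : {1,…,N} → ℝ^n be such that for every face σ ∈ Δ the vectors {v_k : k ∈ σ} are linearly independent, and such that the cones cone(σ) = {Σ_{k∈σ} c_k v_k : c_k ≥ 0} form a fan, meaning cone(σ) ∩ cone(σ′) = cone(σ ∩ σ′) for all σ, σ′ ∈ Δ. Then the linear map Φ from the dual vector space (CH^d(Δ))* to the space of real-valued functions on Δ_d, defined by Φ(φ) = (φ(∂_σ))_{σ∈Δ_d}, is injective with image exactly the space MW_d(Δ) of Minkowski weights of degree d; that is, Φ : (CH^d(Δ))* → MW_d(Δ) is a linear isomorphism. -/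
open MvPolynomial

noncomputable section

/-- The Stanley–Reisner ideal `I_Δ ⊆ ℝ[∂_1,…,∂_N]`, generated by the monomials
`∏_{k∈S} ∂_k` over non-faces `S ∉ Δ`. -/
def srIdeal (N : ℕ) (Δ : Finset (Finset (Fin N))) : Ideal (MvPolynomial (Fin N) ℝ) :=
  Ideal.span {p | ∃ S : Finset (Fin N), S ∉ Δ ∧ p = ∏ k ∈ S, X k}

/-- The ideal `I_Δ + (Θ)`, where `Θ` is spanned by the linear forms
`θ_j = Σ_k v_k(j)·∂_k`, `j = 1,…,n`. -/
def chowIdeal (N n : ℕ) (Δ : Finset (Finset (Fin N))) (v : Fin N → Fin n → ℝ) :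
    Ideal (MvPolynomial (Fin N) ℝ) :=
  srIdeal N Δ ⊔ Ideal.span (Set.range fun j : Fin n => ∑ k : Fin N, C (v k j) * X k)

/-- The Chow ring `CH(Δ) = ℝ[∂_1,…,∂_N]/(I_Δ + (Θ))`. -/
abbrev ChowRing (N n : ℕ) (Δ : Finset (Finset (Fin N))) (v : Fin N → Fin n → ℝ) :=
  MvPolynomial (Fin N) ℝ ⧸ chowIdeal N n Δ v

/-- The degree-`d` graded piece `CH^d(Δ)`: the image in the quotient of the space of
homogeneous polynomials of degree `d`. -/
def chowDeg (N n d : ℕ) (Δ : Finset (Finset (Fin N))) (v : Fin N → Fin n → ℝ) :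
    Submodule ℝ (ChowRing N n Δ v) :=
  Submodule.map (Ideal.Quotient.mkₐ ℝ (chowIdeal N n Δ v)).toLinearMap
    (homogeneousSubmodule (Fin N) ℝ d)

/-- The set `Δ_d` of `d`-element faces of `Δ`. -/
abbrev FaceD (N d : ℕ) (Δ : Finset (Finset (Fin N))) :=
  {σ : Finset (Fin N) // σ ∈ Δ ∧ σ.card = d}

/-- The class `∂_σ = ∏_{k∈σ} ∂_k ∈ CH^d(Δ)` of a `d`-element face `σ`. -/
def faceClass (N n d : ℕ) (Δ : Finset (Finset (Fin N))) (v : Fin N → Fin n → ℝ)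
    (σ : FaceD N d Δ) : chowDeg N n d Δ v :=
  ⟨Ideal.Quotient.mk (chowIdeal N n Δ v) (∏ k ∈ σ.1, X k),
    ⟨∏ k ∈ σ.1, X k, by
      refine SetLike.mem_coe.mpr ?_
      rw [mem_homogeneousSubmodule]
      have h := MvPolynomial.IsHomogeneous.prod σ.1 (fun k => (X k : MvPolynomial (Fin N) ℝ))
        (fun _ => 1) (fun k _ => isHomogeneous_X ℝ k)
      simpa [σ.2.2] using h, rfl⟩⟩

/-- The linear map `Φ : (CH^d(Δ))* → (functions on Δ_d)`, `Φ(φ) = (φ(∂_σ))_σ`. -/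
def PhiMap (N n d : ℕ) (Δ : Finset (Finset (Fin N))) (v : Fin N → Fin n → ℝ) :
    Module.Dual ℝ (chowDeg N n d Δ v) →ₗ[ℝ] (FaceD N d Δ → ℝ) where
  toFun φ := fun σ => φ (faceClass N n d Δ v σ)
  map_add' φ ψ := by ext σ; simp
  map_smul' c φ := by ext σ; simp

/-- The space `MW_d(Δ)` of Minkowski weights of degree `d`: for every face `τ` with
`|τ| = d − 1`, the vector `Σ_{σ∈Δ_d, τ⊂σ} w_σ · v_{i_σ}` lies in the span of
`{v_k : k ∈ τ}` (here `v_{i_σ} = Σ_{k∈σ∖τ} v_k`, since `σ∖τ` is a singleton). -/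
def mwSet (N n d : ℕ) (Δ : Finset (Finset (Fin N))) (v : Fin N → Fin n → ℝ) :
    Set (FaceD N d Δ → ℝ) :=
  {w | ∀ τ : Finset (Fin N), τ ∈ Δ → τ.card + 1 = d →
    (∑ σ : FaceD N d Δ, (if τ ⊆ σ.1 then w σ else 0) • ∑ k ∈ σ.1 \ τ, v k)
      ∈ Submodule.span ℝ (v '' ↑τ)}

/-- The cone spanned by `{v_k : k ∈ σ}`. -/
def coneOf (N n : ℕ) (v : Fin N → Fin n → ℝ) (σ : Finset (Fin N)) : Set (Fin n → ℝ) :=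
  {x | ∃ c : Fin N → ℝ, (∀ k, 0 ≤ c k) ∧ x = ∑ k ∈ σ, c k • v k}

/-
The relations `∑ k, l (v_k) ∂_k = 0` rewrite `∂_k ∂_σ`, `k ∈ σ`, as a combination of squarefree
monomials, so the `∂_σ` span `CH^d(Δ)` and `Φ` is injective. Multiplied by `∂_τ`, the same relations
say that every `Φ(φ)` is balanced at `τ`.

For surjectivity, let `∂_k` act on the functions on `Δ` by `(∂_k · w)(τ) = w(τ ∪ {k})` when
`k ∉ τ`, where the value for `k ∈ τ` is forced by the linear relations, since the `v_j`, `j ∈ τ`,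
are linearly independent. On the functions that are balanced at every face the value so forced
satisfies all linear relations, so these functions form a module over the whole Chow ring, and
`p ↦ (p · w)(∅)` is a functional on it that takes the value `w(σ)` at `∂_σ`.
-/

section DualSystem

variable {ι K V M : Type*} [DecidableEq ι]

/-- Functionals `L σ k`, one for each vertex `k` of a face `σ`, that restrict to the coordinates
with respect to `(v_k)_{k ∈ σ}` on the span of these vectors; `L σ k` is arbitrary when `σ ∉ Δ` or
`k ∉ σ`. It makes linear independence of the `v_k`, `k ∈ σ`, available as data over any ring. -/
def IsDualSystem [CommRing K] [AddCommGroup V] [Module K V] (Δ : Set (Finset ι)) (v : ι → V)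
    (L : Finset ι → ι → Module.Dual K V) : Prop :=
  ∀ σ ∈ Δ, ∀ j ∈ σ, ∀ k ∈ σ, L σ k (v j) = if j = k then 1 else 0

theorem IsDualSystem.sum_smul_eq_of_mem_span [CommRing K] [AddCommGroup V] [Module K V]
    {Δ : Set (Finset ι)} {v : ι → V} {L : Finset ι → ι → Module.Dual K V}
    (hL : IsDualSystem Δ v L) {σ : Finset ι} (hσ : σ ∈ Δ) {y : V}
    (hy : y ∈ Submodule.span K (v '' σ)) : ∑ k ∈ σ, L σ k y • v k = y := by
  induction hy using Submodule.span_induction with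
  | mem y hy =>
    obtain ⟨j, hj, rfl⟩ := hy
    calc ∑ k ∈ σ, L σ k (v j) • v k = ∑ k ∈ σ, if j = k then v k else 0 :=
          Finset.sum_congr rfl fun k hk => by rw [hL σ hσ j hj k hk, ite_smul, one_smul, zero_smul]
      _ = v j := by rw [Finset.sum_ite_eq, if_pos (Finset.mem_coe.mp hj)]
  | zero => simp
  | add y z _ _ hy hz => simp only [map_add, add_smul, Finset.sum_add_distrib, hy, hz]
  | smul c y _ hy => simp only [map_smul, smul_assoc, ← Finset.smul_sum, hy]

theorem IsDualSystem.sum_apply_smul_eq [CommRing K] [AddCommGroup V] [Module K V]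
    [AddCommGroup M] [Module K M] {Δ : Set (Finset ι)} {v : ι → V}
    {L : Finset ι → ι → Module.Dual K V} (hL : IsDualSystem Δ v L) {σ : Finset ι} (hσ : σ ∈ Δ)
    {k : ι} (hk : k ∈ σ) (c : ι → M) : ∑ j ∈ σ, L σ k (v j) • c j = c k :=
  calc ∑ j ∈ σ, L σ k (v j) • c j = ∑ j ∈ σ, if j = k then c j else 0 :=
        Finset.sum_congr rfl fun j hj => by rw [hL σ hσ j hj k hk, ite_smul, one_smul, zero_smul]
    _ = c k := by rw [Finset.sum_ite_eq', if_pos hk]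

theorem exists_isDualSystem [Field K] [AddCommGroup V] [Module K V]
    {Δ : Set (Finset ι)} {v : ι → V}
    (hv : ∀ σ ∈ Δ, LinearIndependent K fun k : {x // x ∈ σ} => v k) :
    ∃ L : Finset ι → ι → Module.Dual K V, IsDualSystem Δ v L := by
  have exists_coord (σ : Finset ι) (k : ι) : ∃ l : Module.Dual K V,
      σ ∈ Δ → k ∈ σ → ∀ j ∈ σ, l (v j) = if j = k then 1 else 0 := by
    by_cases h : σ ∈ Δ ∧ k ∈ σ
    · obtain ⟨hσ, hk⟩ := h
      let b := Module.Basis.span (hv σ hσ)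
      obtain ⟨l, hl⟩ := LinearMap.exists_extend (b.coord ⟨k, hk⟩)
      refine ⟨l, fun _ _ j hj => ?_⟩
      have hbj : (b ⟨j, hj⟩ : V) = v j :=
        congrArg Subtype.val (Module.Basis.span_apply (hv σ hσ) ⟨j, hj⟩)
      calc l (v j) = b.coord ⟨k, hk⟩ (b ⟨j, hj⟩) := by rw [← hbj, ← hl]; rfl
        _ = if j = k then 1 else 0 := by simp [Module.Basis.coord_apply, Finsupp.single_apply]
    · exact ⟨0, fun hσ hk => absurd ⟨hσ, hk⟩ h⟩
  choose L hL using exists_coord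
  exact ⟨L, fun σ hσ j hj k hk => hL σ k hσ hk j hj⟩

end DualSystem

section Commute

variable {ι K A : Type*} [CommRing K] [Ring A] [Algebra K A]

open scoped IsMulCommutative in
/-- Evaluation of polynomials at pairwise commuting elements of a possibly noncommutative algebra.
`MvPolynomial.aeval` needs a commutative target, so the evaluation takes place in the subalgebra
generated by these elements. -/
def aevalOfCommute (x : ι → A) (hx : ∀ i j, Commute (x i) (x j)) : MvPolynomial ι K →ₐ[K] A :=
  have : IsMulCommutative (Algebra.adjoin K (Set.range x)) :=
    Algebra.isMulCommutative_adjoin K <| by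
      rintro _ ⟨i, rfl⟩ _ ⟨j, rfl⟩
      exact hx i j
  (Algebra.adjoin K (Set.range x)).val.comp
    (aeval fun i => ⟨x i, Algebra.subset_adjoin ⟨i, rfl⟩⟩)

theorem aevalOfCommute_X (x : ι → A) (hx : ∀ i j, Commute (x i) (x j)) (i : ι) :
    aevalOfCommute (K := K) x hx (X i) = x i := by
  simp [aevalOfCommute]

end Commute

section CapProduct

variable {ι K V : Type*} [Fintype ι] [DecidableEq ι] [CommRing K] [AddCommGroup V] [Module K V]

variable (K) in
/-- Minkowski weights of all degrees at once, as functions on all sets of vertices that vanish off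
`Δ`: balancing at a face `τ` only involves the values at faces with `|τ| + 1` elements, so this is
the direct sum of the spaces `MW_d(Δ)`. It is the module on which the Chow ring acts. -/
def balancedWeights (Δ : Set (Finset ι)) (v : ι → V) : Submodule K (Finset ι → K) where
  carrier := {w | (∀ σ ∉ Δ, w σ = 0) ∧
    ∀ τ ∈ Δ, ∑ a ∈ τᶜ, w (insert a τ) • v a ∈ Submodule.span K (v '' τ)}
  zero_mem' := by simp
  add_mem' := by
    rintro w u ⟨hw, hw'⟩ ⟨hu, hu'⟩
    refine ⟨fun σ hσ => by simp [hw σ hσ, hu σ hσ], fun τ hτ => ?_⟩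
    simpa only [Pi.add_apply, add_smul, Finset.sum_add_distrib]
      using add_mem (hw' τ hτ) (hu' τ hτ)
  smul_mem' := by
    rintro c w ⟨hw, hw'⟩
    refine ⟨fun σ hσ => by simp [hw σ hσ], fun τ hτ => ?_⟩
    simpa only [Pi.smul_apply, smul_assoc, ← Finset.smul_sum]
      using Submodule.smul_mem _ c (hw' τ hτ)

/-- The action of the variable `∂_k` on weights. For `k ∈ τ` the value at `τ` is the one forced by
the relation `∑ k, l (v_k) ∂_k = 0` with `l = L τ k`, in which the terms from `τ ∖ {k}` drop out. -/
def capVertex (v : ι → V) (L : Finset ι → ι → Module.Dual K V) (k : ι) :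
    Module.End K (Finset ι → K) where
  toFun w τ := if k ∈ τ then -L τ k (∑ a ∈ τᶜ, w (insert a τ) • v a) else w (insert k τ)
  map_add' w u := by
    ext τ
    by_cases hk : k ∈ τ <;> simp [hk, add_smul, Finset.sum_add_distrib, add_comm]
  map_smul' c w := by
    ext τ
    by_cases hk : k ∈ τ <;> simp [hk, mul_assoc, Finset.mul_sum]

variable {Δ : Set (Finset ι)} {v : ι → V} {L : Finset ι → ι → Module.Dual K V}
  {w : Finset ι → K} {j k a : ι} {τ : Finset ι}

theorem capVertex_apply_of_mem (hk : k ∈ τ) :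
    capVertex v L k w τ = -L τ k (∑ a ∈ τᶜ, w (insert a τ) • v a) :=
  if_pos hk

theorem capVertex_apply_of_notMem (hk : k ∉ τ) : capVertex v L k w τ = w (insert k τ) :=
  if_neg hk

theorem capVertex_insert_swap (hj : j ∉ τ) (hk : k ∉ τ) :
    capVertex v L j w (insert k τ) = capVertex v L k w (insert j τ) := by
  obtain rfl | hjk := eq_or_ne j k
  · rfl
  · rw [capVertex_apply_of_notMem (by simp [hj, hjk]),
      capVertex_apply_of_notMem (by simp [hk, hjk.symm]), Finset.insert_comm]

theorem capVertex_apply_eq_zero (hΔ : IsLowerSet Δ) (hw : ∀ σ ∉ Δ, w σ = 0) (hτ : τ ∉ Δ) :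
    capVertex v L k w τ = 0 := by
  have hw_insert (a : ι) : w (insert a τ) = 0 :=
    hw _ fun h => hτ (hΔ (Finset.subset_insert a τ) h)
  by_cases hk : k ∈ τ
  · simp [capVertex_apply_of_mem hk, hw_insert]
  · rw [capVertex_apply_of_notMem hk, hw_insert]

theorem sum_capVertex_smul_eq_zero (hΔ : IsLowerSet Δ) (hL : IsDualSystem Δ v L)
    (hw : w ∈ balancedWeights K Δ v) (τ : Finset ι) : ∑ k, capVertex v L k w τ • v k = 0 := by
  by_cases hτ : τ ∈ Δ
  · have hface : ∑ k ∈ τ, capVertex v L k w τ • v k = -∑ a ∈ τᶜ, w (insert a τ) • v a := by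
      rw [← hL.sum_smul_eq_of_mem_span hτ (hw.2 τ hτ), ← Finset.sum_neg_distrib]
      exact Finset.sum_congr rfl fun k hk => by rw [capVertex_apply_of_mem hk, neg_smul]
    have hcompl : ∑ k ∈ τᶜ, capVertex v L k w τ • v k = ∑ a ∈ τᶜ, w (insert a τ) • v a :=
      Finset.sum_congr rfl fun k hk => by
        rw [capVertex_apply_of_notMem (Finset.mem_compl.mp hk)]
    rw [← Finset.sum_add_sum_compl τ, hface, hcompl, neg_add_cancel]
  · simp [capVertex_apply_eq_zero hΔ hw.1 hτ]

theorem sum_compl_capVertex_insert_smul_mem_span (hΔ : IsLowerSet Δ) (hL : IsDualSystem Δ v L)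
    (hw : w ∈ balancedWeights K Δ v) (k : ι) (τ : Finset ι) :
    ∑ a ∈ τᶜ, capVertex v L a w (insert k τ) • v a ∈ Submodule.span K (v '' τ) := by
  have hsum := sum_capVertex_smul_eq_zero hΔ hL hw (insert k τ)
  rw [← Finset.sum_add_sum_compl τ] at hsum
  rw [eq_neg_of_add_eq_zero_right hsum]
  exact neg_mem <| Submodule.sum_mem _ fun a ha =>
    Submodule.smul_mem _ _ (Submodule.subset_span ⟨a, ha, rfl⟩)

-- The relation `∑ b, l (v_b) ∂_b = 0` with `l = L τ k`, at the face `insert a τ`.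
theorem capVertex_insert_of_mem (hΔ : IsLowerSet Δ) (hL : IsDualSystem Δ v L)
    (hw : w ∈ balancedWeights K Δ v) (hk : k ∈ τ) (ha : a ∉ τ) :
    capVertex v L k w (insert a τ) = capVertex v L k (capVertex v L a w) τ := by
  by_cases hτ : τ ∈ Δ
  · have hrel : ∑ b, L τ k (v b) • capVertex v L b w (insert a τ) = 0 := by
      simpa [mul_comm] using congrArg (L τ k) (sum_capVertex_smul_eq_zero hΔ hL hw (insert a τ))
    rw [← Finset.sum_add_sum_compl τ, hL.sum_apply_smul_eq hτ hk] at hrel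
    rw [eq_neg_of_add_eq_zero_left hrel, capVertex_apply_of_mem hk, map_sum]
    refine congrArg Neg.neg (Finset.sum_congr rfl fun b hb => ?_)
    rw [capVertex_insert_swap (Finset.mem_compl.mp hb) ha, map_smul, smul_eq_mul, smul_eq_mul,
      mul_comm]
  · have hcap (j : ι) : ∀ σ ∉ Δ, capVertex v L j w σ = 0 := fun σ hσ =>
      capVertex_apply_eq_zero hΔ hw.1 hσ
    rw [hcap k _ fun h => hτ (hΔ (Finset.subset_insert a τ) h),
      capVertex_apply_eq_zero hΔ (hcap a) hτ]

theorem capVertex_mem_balancedWeights (hΔ : IsLowerSet Δ) (hL : IsDualSystem Δ v L) (k : ι)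
    (hw : w ∈ balancedWeights K Δ v) : capVertex v L k w ∈ balancedWeights K Δ v := by
  refine ⟨fun σ hσ => capVertex_apply_eq_zero hΔ hw.1 hσ, fun τ _ => ?_⟩
  have hspan (b : ι) := sum_compl_capVertex_insert_smul_mem_span hΔ hL hw b τ
  by_cases hk : k ∈ τ
  · have hexpand : ∑ a ∈ τᶜ, capVertex v L k w (insert a τ) • v a
        = -∑ b ∈ τᶜ, L τ k (v b) • ∑ a ∈ τᶜ, capVertex v L a w (insert b τ) • v a := by
      simp only [Finset.smul_sum, smul_smul]
      rw [Finset.sum_comm, ← Finset.sum_neg_distrib]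
      refine Finset.sum_congr rfl fun a ha => ?_
      rw [capVertex_insert_of_mem hΔ hL hw hk (Finset.mem_compl.mp ha),
        capVertex_apply_of_mem hk, map_sum, neg_smul, Finset.sum_smul]
      simp only [map_smul, smul_eq_mul, mul_comm]
    rw [hexpand]
    exact neg_mem <| Submodule.sum_mem _ fun b _ => Submodule.smul_mem _ _ (hspan b)
  · rw [Finset.sum_congr rfl fun a ha => by
      rw [capVertex_insert_swap hk (Finset.mem_compl.mp ha)]]
    exact hspan k

theorem capVertex_comm (hΔ : IsLowerSet Δ) (hL : IsDualSystem Δ v L)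
    (hw : w ∈ balancedWeights K Δ v) (j k : ι) :
    capVertex v L j (capVertex v L k w) = capVertex v L k (capVertex v L j w) := by
  ext τ
  by_cases hj : j ∈ τ <;> by_cases hk : k ∈ τ
  · have hexpand {i m : ι} (hi : i ∈ τ) (hm : m ∈ τ) :
        capVertex v L i (capVertex v L m w) τ = ∑ a ∈ τᶜ, ∑ b ∈ τᶜ,
          L τ i (v a) * L τ m (v b) * capVertex v L a w (insert b τ) := by
      simp only [capVertex_apply_of_mem hi, map_sum, ← Finset.sum_neg_distrib]
      refine Finset.sum_congr rfl fun a ha => ?_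
      rw [capVertex_insert_of_mem hΔ hL hw hm (Finset.mem_compl.mp ha), capVertex_apply_of_mem hm]
      simp only [map_smul, map_sum, smul_eq_mul, neg_mul, neg_neg, Finset.sum_mul]
      exact Finset.sum_congr rfl fun b _ => by ring
    rw [hexpand hj hk, hexpand hk hj, Finset.sum_comm]
    refine Finset.sum_congr rfl fun a ha => Finset.sum_congr rfl fun b hb => ?_
    rw [capVertex_insert_swap (Finset.mem_compl.mp hb) (Finset.mem_compl.mp ha),
      mul_comm (L τ j _)]
  · rw [capVertex_apply_of_notMem hk, capVertex_insert_of_mem hΔ hL hw hj hk]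
  · rw [capVertex_apply_of_notMem hj, capVertex_insert_of_mem hΔ hL hw hk hj]
  · rw [capVertex_apply_of_notMem hj, capVertex_apply_of_notMem hk, capVertex_insert_swap hk hj]

/-- The action of the ring `K[∂]` on balanced weights in which `∂_k` acts by `capVertex`. -/
def capAlgHom (hΔ : IsLowerSet Δ) (hL : IsDualSystem Δ v L) :
    MvPolynomial ι K →ₐ[K] Module.End K (balancedWeights K Δ v) :=
  aevalOfCommute
    (fun k => (capVertex v L k).restrict fun _ => capVertex_mem_balancedWeights hΔ hL k)
    fun j k => (commute_iff_eq _ _).mpr <|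
      LinearMap.ext fun w => Subtype.ext (capVertex_comm hΔ hL w.2 j k)

variable (hΔ : IsLowerSet Δ) (hL : IsDualSystem Δ v L)

theorem capAlgHom_X_apply (w : balancedWeights K Δ v) :
    (capAlgHom hΔ hL (X k) w : Finset ι → K) = capVertex v L k w := by
  rw [capAlgHom, aevalOfCommute_X, LinearMap.coe_restrict_apply]

theorem capAlgHom_prod_X_apply_of_disjoint {S : Finset ι} (hS : Disjoint S τ)
    (w : balancedWeights K Δ v) :
    (capAlgHom hΔ hL (∏ k ∈ S, X k) w : Finset ι → K) τ = (w : Finset ι → K) (S ∪ τ) := by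
  induction S using Finset.induction_on generalizing τ with
  | empty => simp
  | insert a S haS ih =>
    obtain ⟨haτ, hSτ⟩ := Finset.disjoint_insert_left.mp hS
    rw [Finset.prod_insert haS, map_mul, Module.End.mul_apply, capAlgHom_X_apply,
      capVertex_apply_of_notMem haτ, ih (Finset.disjoint_insert_right.mpr ⟨haS, hSτ⟩),
      Finset.union_insert, Finset.insert_union]

theorem capAlgHom_prod_X_apply_empty (S : Finset ι) (w : balancedWeights K Δ v) :
    (capAlgHom hΔ hL (∏ k ∈ S, X k) w : Finset ι → K) ∅ = (w : Finset ι → K) S := by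
  rw [capAlgHom_prod_X_apply_of_disjoint hΔ hL (Finset.disjoint_empty_right S),
    Finset.union_empty]

theorem capAlgHom_prod_X_eq_zero {S : Finset ι} (hS : S ∉ Δ) :
    capAlgHom hΔ hL (∏ k ∈ S, X k) = 0 := by
  ext w τ
  calc (capAlgHom hΔ hL (∏ k ∈ S, X k) w : Finset ι → K) τ
      = (capAlgHom hΔ hL ((∏ k ∈ τ, X k) * ∏ k ∈ S, X k) w : Finset ι → K) ∅ := by
        rw [map_mul, Module.End.mul_apply, capAlgHom_prod_X_apply_empty]
    _ = (capAlgHom hΔ hL (∏ k ∈ τ, X k) w : Finset ι → K) S := by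
        rw [mul_comm, map_mul, Module.End.mul_apply, capAlgHom_prod_X_apply_empty]
    _ = 0 := (capAlgHom hΔ hL (∏ k ∈ τ, X k) w).2.1 S hS

theorem capAlgHom_sum_C_mul_X_eq_zero (l : Module.Dual K V) :
    capAlgHom hΔ hL (∑ k, C (l (v k)) * X k) = 0 := by
  ext w τ
  have hrel := congrArg l (sum_capVertex_smul_eq_zero hΔ hL w.2 τ)
  simpa [C_mul', capAlgHom_X_apply, mul_comm] using hrel

end CapProduct

section FaceSpan

variable {ι K V A : Type*} [CommRing A]

variable (K) in
/-- The span of the face monomials `∏ k ∈ σ, x k`, `σ ∈ Δ`, of degree `d` in the elements `x k` of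
an algebra. -/
def faceSpan [CommRing K] [Algebra K A] (Δ : Set (Finset ι)) (x : ι → A) (d : ℕ) :
    Submodule K A :=
  Submodule.span K ((fun σ => ∏ k ∈ σ, x k) '' {σ | σ ∈ Δ ∧ σ.card = d})

theorem prod_mem_faceSpan [CommRing K] [Algebra K A] {Δ : Set (Finset ι)} {x : ι → A}
    (hnonface : ∀ S ∉ Δ, ∏ k ∈ S, x k = 0) (S : Finset ι) :
    ∏ k ∈ S, x k ∈ faceSpan K Δ x S.card := by
  by_cases hS : S ∈ Δ
  · exact Submodule.subset_span ⟨S, ⟨hS, rfl⟩, rfl⟩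
  · rw [hnonface S hS]
    exact zero_mem _

variable [Fintype ι] [DecidableEq ι]

theorem mul_prod_mem_faceSpan_of_mem [CommRing K] [AddCommGroup V] [Module K V] [Algebra K A]
    {Δ : Set (Finset ι)} {v : ι → V} {L : Finset ι → ι → Module.Dual K V}
    (hL : IsDualSystem Δ v L) {x : ι → A} (hnonface : ∀ S ∉ Δ, ∏ k ∈ S, x k = 0)
    (hlinear : ∀ l : Module.Dual K V, ∑ k, l (v k) • x k = 0) {σ : Finset ι} (hσ : σ ∈ Δ)
    {k : ι} (hk : k ∈ σ) : x k * ∏ i ∈ σ, x i ∈ faceSpan K Δ x (σ.card + 1) := by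
  have hx : x k = -∑ a ∈ σᶜ, L σ k (v a) • x a := by
    rw [← hL.sum_apply_smul_eq hσ hk x]
    exact eq_neg_of_add_eq_zero_left ((Finset.sum_add_sum_compl σ _).trans (hlinear (L σ k)))
  rw [hx, neg_mul, Finset.sum_mul]
  refine neg_mem <| Submodule.sum_mem _ fun a ha => ?_
  have haσ : a ∉ σ := Finset.mem_compl.mp ha
  rw [smul_mul_assoc, ← Finset.prod_insert haσ, ← Finset.card_insert_of_notMem haσ]
  exact Submodule.smul_mem _ _ (prod_mem_faceSpan hnonface _)

theorem span_range_pow_le_faceSpan [CommRing K] [AddCommGroup V] [Module K V] [Algebra K A]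
    {Δ : Set (Finset ι)} {v : ι → V} {L : Finset ι → ι → Module.Dual K V}
    (hL : IsDualSystem Δ v L) {x : ι → A} (hnonface : ∀ S ∉ Δ, ∏ k ∈ S, x k = 0)
    (hlinear : ∀ l : Module.Dual K V, ∑ k, l (v k) • x k = 0) (d : ℕ) :
    Submodule.span K (Set.range x) ^ d ≤ faceSpan K Δ x d := by
  induction d with
  | zero =>
    rw [pow_zero, Submodule.one_le]
    exact prod_mem_faceSpan hnonface ∅
  | succ d ih =>
    have hmul : Submodule.span K (Set.range x) * faceSpan K Δ x d ≤ faceSpan K Δ x (d + 1) := by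
      rw [faceSpan, Submodule.span_mul_span, Submodule.span_le]
      rintro _ ⟨_, ⟨k, rfl⟩, _, ⟨σ, ⟨hσ, rfl⟩, rfl⟩, rfl⟩
      by_cases hk : k ∈ σ
      · exact mul_prod_mem_faceSpan_of_mem hL hnonface hlinear hσ hk
      · have hinsert := prod_mem_faceSpan (K := K) hnonface (insert k σ)
        rwa [Finset.prod_insert hk, Finset.card_insert_of_notMem hk] at hinsert
    rw [pow_succ']
    exact (mul_le_mul' le_rfl ih).trans hmul

theorem map_prod_mem_balancedWeights [Field K] [AddCommGroup V] [Module K V] [Algebra K A]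
    {Δ : Set (Finset ι)} {v : ι → V} {x : ι → A} (hnonface : ∀ S ∉ Δ, ∏ k ∈ S, x k = 0)
    (hlinear : ∀ l : Module.Dual K V, ∑ k, l (v k) • x k = 0) (g : Module.Dual K A) :
    (fun σ => g (∏ k ∈ σ, x k)) ∈ balancedWeights K Δ v := by
  refine ⟨fun σ hσ => by simp only [hnonface σ hσ, map_zero], fun τ _ => ?_⟩
  rw [← Subspace.forall_mem_dualAnnihilator_apply_eq_zero_iff]
  intro l hl
  have hlτ : ∑ k ∈ τ, l (v k) • x k = 0 := Finset.sum_eq_zero fun k hk => by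
    rw [(Submodule.mem_dualAnnihilator l).mp hl _ (Submodule.subset_span ⟨k, hk, rfl⟩), zero_smul]
  have hlcompl : ∑ a ∈ τᶜ, l (v a) • x a = 0 := by
    rw [← hlinear l, ← Finset.sum_add_sum_compl τ, hlτ, zero_add]
  calc l (∑ a ∈ τᶜ, g (∏ k ∈ insert a τ, x k) • v a)
      = g ((∑ a ∈ τᶜ, l (v a) • x a) * ∏ k ∈ τ, x k) := by
        simp only [map_sum, map_smul, smul_eq_mul, Finset.sum_mul, smul_mul_assoc]
        exact Finset.sum_congr rfl fun a ha => by
          rw [Finset.prod_insert (Finset.mem_compl.mp ha), mul_comm]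
    _ = 0 := by rw [hlcompl, zero_mul, map_zero]

end FaceSpan

section ChowRing

variable {N n d : ℕ} {Δ : Finset (Finset (Fin N))} {v : Fin N → Fin n → ℝ}

/-- The class of the variable `∂_k` in the Chow ring. -/
def vertexClass (N n : ℕ) (Δ : Finset (Finset (Fin N))) (v : Fin N → Fin n → ℝ) (k : Fin N) :
    ChowRing N n Δ v :=
  Ideal.Quotient.mkₐ ℝ (chowIdeal N n Δ v) (X k)

theorem coe_faceClass (σ : FaceD N d Δ) :
    (faceClass N n d Δ v σ : ChowRing N n Δ v) = ∏ k ∈ σ.1, vertexClass N n Δ v k :=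
  map_prod _ _ _

theorem prod_vertexClass_eq_zero {S : Finset (Fin N)} (hS : S ∉ (Δ : Set (Finset (Fin N)))) :
    ∏ k ∈ S, vertexClass N n Δ v k = 0 := by
  simp only [vertexClass, ← map_prod]
  exact Ideal.Quotient.eq_zero_iff_mem.mpr
    (Ideal.mem_sup_left (Ideal.subset_span ⟨S, hS, rfl⟩))

theorem sum_smul_vertexClass_eq_zero (l : Module.Dual ℝ (Fin n → ℝ)) :
    ∑ k, l (v k) • vertexClass N n Δ v k = 0 := by
  have hcoord (j : Fin n) : ∑ k, v k j • vertexClass N n Δ v k = 0 := by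
    simp only [vertexClass, ← map_smul, ← map_sum, ← C_mul']
    exact Ideal.Quotient.eq_zero_iff_mem.mpr
      (Ideal.mem_sup_right (Ideal.subset_span ⟨j, rfl⟩))
  calc ∑ k, l (v k) • vertexClass N n Δ v k
      = ∑ k, ∑ j, (v k j * l (Pi.single j 1)) • vertexClass N n Δ v k := by
        refine Finset.sum_congr rfl fun k _ => ?_
        conv_lhs => rw [pi_eq_sum_univ' (v k), map_sum, Finset.sum_smul]
        simp only [map_smul, smul_eq_mul]
    _ = ∑ j, l (Pi.single j 1) • ∑ k, v k j • vertexClass N n Δ v k := by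
        rw [Finset.sum_comm]
        simp only [Finset.smul_sum, smul_smul, mul_comm]
    _ = 0 := by simp only [hcoord, smul_zero, Finset.sum_const_zero]

theorem chowDeg_eq_span_range_pow :
    chowDeg N n d Δ v = Submodule.span ℝ (Set.range (vertexClass N n Δ v)) ^ d := by
  rw [chowDeg, ← homogeneousSubmodule_one_pow, Submodule.map_pow,
    homogeneousSubmodule_one_eq_span_X, Submodule.map_span, ← Set.range_comp]
  rfl

theorem span_range_faceClass_eq_top
    (hv : ∀ σ ∈ Δ, LinearIndependent ℝ fun k : {x // x ∈ σ} => v k) :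
    Submodule.span ℝ (Set.range (faceClass N n d Δ v)) = ⊤ := by
  obtain ⟨L, hL⟩ := exists_isDualSystem (Δ := (Δ : Set (Finset (Fin N)))) hv
  have hle : chowDeg N n d Δ v ≤ faceSpan ℝ (Δ : Set (Finset (Fin N))) (vertexClass N n Δ v) d :=
    chowDeg_eq_span_range_pow.trans_le <| span_range_pow_le_faceSpan hL
      (fun _ => prod_vertexClass_eq_zero) sum_smul_vertexClass_eq_zero d
  have hfaces : Submodule.map (chowDeg N n d Δ v).subtype
      (Submodule.span ℝ (Set.range (faceClass N n d Δ v)))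
        = faceSpan ℝ (Δ : Set (Finset (Fin N))) (vertexClass N n Δ v) d := by
    rw [Submodule.map_span, faceSpan, ← Set.range_comp, Set.image_eq_range]
    exact congrArg (Submodule.span ℝ ∘ Set.range) (funext coe_faceClass)
  refine eq_top_iff.mpr fun y _ => ?_
  obtain ⟨z, hz, hzy⟩ := hfaces.ge (hle y.2)
  rwa [← Subtype.ext hzy]

theorem PhiMap_injective (hv : ∀ σ ∈ Δ, LinearIndependent ℝ fun k : {x // x ∈ σ} => v k) :
    Function.Injective (PhiMap N n d Δ v) := fun _ _ h =>
  LinearMap.ext_on_range (span_range_faceClass_eq_top hv) (congrFun h)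

theorem sum_faceD_smul_eq {u : Finset (Fin N) → ℝ} (hu : ∀ σ ∉ Δ, u σ = 0) {τ : Finset (Fin N)}
    (hτ : τ.card + 1 = d) :
    ∑ σ : FaceD N d Δ, (if τ ⊆ σ.1 then u σ.1 else 0) • ∑ k ∈ σ.1 \ τ, v k
      = ∑ a ∈ τᶜ, u (insert a τ) • v a := by
  calc ∑ σ : FaceD N d Δ, (if τ ⊆ σ.1 then u σ.1 else 0) • ∑ k ∈ σ.1 \ τ, v k
      = ∑ σ ∈ Finset.univ.powersetCard d, (if τ ⊆ σ then u σ else 0) • ∑ k ∈ σ \ τ, v k := by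
        refine Finset.sum_of_injOn Subtype.val Subtype.val_injective.injOn ?_ ?_ fun _ _ => rfl
        · exact fun σ _ => by simp [σ.2.2]
        · intro σ hσ hσΔ
          have huσ : u σ = 0 := hu σ fun h => hσΔ
            ⟨⟨σ, h, (Finset.mem_powersetCard.mp hσ).2⟩, Finset.mem_univ _, rfl⟩
          rw [huσ, ite_self, zero_smul]
    _ = ∑ a ∈ τᶜ, u (insert a τ) • v a := by
        symm
        refine Finset.sum_of_injOn (insert · τ) (Finset.insert_inj_on' τ) ?_ ?_ ?_
        · intro a ha
          simpa [Finset.card_insert_of_notMem (Finset.mem_compl.mp ha)] using hτ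
        · intro σ hσ hσ'
          have hsub : ¬ τ ⊆ σ := fun hsub => by
            obtain ⟨a, ha, rfl⟩ := Finset.exists_eq_insert_iff.mpr
              ⟨hsub, hτ.trans (Finset.mem_powersetCard.mp hσ).2.symm⟩
            exact hσ' ⟨a, by simpa using ha, rfl⟩
          rw [if_neg hsub, zero_smul]
        · intro a ha
          rw [if_pos (Finset.subset_insert a τ),
            Finset.insert_sdiff_cancel (Finset.mem_compl.mp ha), Finset.sum_singleton]

theorem mem_mwSet_iff_of_eq_zero {u : Finset (Fin N) → ℝ} (hu : ∀ σ ∉ Δ, u σ = 0) :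
    (fun σ : FaceD N d Δ => u σ.1) ∈ mwSet N n d Δ v ↔ ∀ τ ∈ Δ, τ.card + 1 = d →
      ∑ a ∈ τᶜ, u (insert a τ) • v a ∈ Submodule.span ℝ (v '' τ) := by
  refine forall₃_congr fun τ _ hτ => ?_
  rw [sum_faceD_smul_eq hu hτ]

theorem range_PhiMap_subset_mwSet : Set.range (PhiMap N n d Δ v) ⊆ mwSet N n d Δ v := by
  rintro _ ⟨f, rfl⟩
  obtain ⟨g, hg⟩ := LinearMap.exists_extend f
  have hweight := map_prod_mem_balancedWeights (fun _ => prod_vertexClass_eq_zero)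
    (sum_smul_vertexClass_eq_zero (Δ := Δ) (v := v)) g
  have hrestrict : PhiMap N n d Δ v f = fun σ => g (∏ k ∈ σ.1, vertexClass N n Δ v k) :=
    funext fun σ => by
      rw [← coe_faceClass]
      exact (LinearMap.congr_fun hg _).symm
  rw [hrestrict, mem_mwSet_iff_of_eq_zero hweight.1]
  exact fun τ hτ _ => hweight.2 τ hτ

theorem extend_mem_balancedWeights {w : FaceD N d Δ → ℝ} (hw : w ∈ mwSet N n d Δ v) :
    Function.extend Subtype.val w 0 ∈ balancedWeights ℝ (Δ : Set (Finset (Fin N))) v := by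
  have hzero (σ : Finset (Fin N)) (hσ : ¬ (σ ∈ Δ ∧ σ.card = d)) :
      Function.extend Subtype.val w 0 σ = 0 :=
    Function.extend_apply' _ _ _ fun ⟨ρ, hρ⟩ => hσ (hρ ▸ ρ.2)
  have hoff : ∀ σ ∉ Δ, Function.extend Subtype.val w 0 σ = 0 := fun σ hσ =>
    hzero σ fun h => hσ h.1
  refine ⟨hoff, fun τ hτ => ?_⟩
  by_cases hd : τ.card + 1 = d
  · refine (mem_mwSet_iff_of_eq_zero hoff).mp ?_ τ hτ hd
    simpa only [Subtype.val_injective.extend_apply] using hw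
  · rw [Finset.sum_eq_zero fun a ha => ?_]
    · exact zero_mem _
    · rw [hzero _ fun h => hd ?_, zero_smul]
      rw [← Finset.card_insert_of_notMem (Finset.mem_compl.mp ha), h.2]

theorem chowIdeal_le_ker_capAlgHom (hΔ : IsLowerSet (Δ : Set (Finset (Fin N))))
    {L : Finset (Fin N) → Fin N → Module.Dual ℝ (Fin n → ℝ)}
    (hL : IsDualSystem (Δ : Set (Finset (Fin N))) v L) :
    chowIdeal N n Δ v ≤ RingHom.ker (capAlgHom hΔ hL) := by
  refine sup_le (Ideal.span_le.mpr ?_) (Ideal.span_le.mpr ?_)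
  · rintro _ ⟨S, hS, rfl⟩
    exact capAlgHom_prod_X_eq_zero hΔ hL hS
  · rintro _ ⟨j, rfl⟩
    exact capAlgHom_sum_C_mul_X_eq_zero hΔ hL (LinearMap.proj j)

theorem mwSet_subset_range_PhiMap (hΔ : IsLowerSet (Δ : Set (Finset (Fin N))))
    (hv : ∀ σ ∈ Δ, LinearIndependent ℝ fun k : {x // x ∈ σ} => v k) :
    mwSet N n d Δ v ⊆ Set.range (PhiMap N n d Δ v) := by
  intro w hw
  obtain ⟨L, hL⟩ := exists_isDualSystem (Δ := (Δ : Set (Finset (Fin N)))) hv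
  let W := balancedWeights ℝ (Δ : Set (Finset (Fin N))) v
  let w' : W := ⟨_, extend_mem_balancedWeights hw⟩
  let action : ChowRing N n Δ v →ₐ[ℝ] Module.End ℝ W :=
    Ideal.Quotient.liftₐ _ (capAlgHom hΔ hL) (chowIdeal_le_ker_capAlgHom hΔ hL)
  let g : Module.Dual ℝ (ChowRing N n Δ v) :=
    LinearMap.proj ∅ ∘ₗ W.subtype ∘ₗ LinearMap.applyₗ w' ∘ₗ action.toLinearMap
  refine ⟨g ∘ₗ (chowDeg N n d Δ v).subtype, funext fun σ => ?_⟩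
  calc g (faceClass N n d Δ v σ)
      = (capAlgHom hΔ hL (∏ k ∈ σ.1, X k) w' : Finset (Fin N) → ℝ) ∅ := rfl
    _ = Function.extend Subtype.val w 0 σ.1 := capAlgHom_prod_X_apply_empty hΔ hL σ.1 w'
    _ = w σ := Subtype.val_injective.extend_apply w 0 σ

end ChowRing

theorem stmt0_general (N n d : ℕ) (Δ : Finset (Finset (Fin N))) (v : Fin N → Fin n → ℝ)
    (hcomplex : ∀ σ ∈ Δ, ∀ τ ⊆ σ, τ ∈ Δ)
    (hindep : ∀ σ ∈ Δ, LinearIndependent ℝ (fun k : {x : Fin N // x ∈ σ} => v k)) :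
    Function.Injective (PhiMap N n d Δ v) ∧
      Set.range (PhiMap N n d Δ v) = mwSet N n d Δ v :=
  have hΔ : IsLowerSet (Δ : Set (Finset (Fin N))) := fun σ τ hτσ hσ => hcomplex σ hσ τ hτσ
  ⟨PhiMap_injective hindep,
    range_PhiMap_subset_mwSet.antisymm (mwSet_subset_range_PhiMap hΔ hindep)⟩

/-- for a pure `d`-dimensional simplicial complex `Δ` whose cones
`cone(σ)`, `σ ∈ Δ`, are simplicial and form a fan in `ℝ^n`, the linear map
`Φ : (CH^d(Δ))* → MW_d(Δ)`, `Φ(φ) = (φ(∂_σ))_{σ∈Δ_d}`, is a linear isomorphism: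
it is injective with image exactly the space of Minkowski weights of degree `d`. -/
theorem stmt0 (N n d : ℕ) (Δ : Finset (Finset (Fin N))) (v : Fin N → Fin n → ℝ)
    (hcomplex : ∀ σ ∈ Δ, ∀ τ ⊆ σ, τ ∈ Δ)
    (hpure : ∀ σ ∈ Δ, (∀ σ' ∈ Δ, σ ⊆ σ' → σ = σ') → σ.card = d)
    (hindep : ∀ σ ∈ Δ, LinearIndependent ℝ (fun k : {x : Fin N // x ∈ σ} => v k))
    (hfan : ∀ σ ∈ Δ, ∀ σ' ∈ Δ,
      coneOf N n v σ ∩ coneOf N n v σ' = coneOf N n v (σ ∩ σ')) :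
    Function.Injective (PhiMap N n d Δ v) ∧
      Set.range (PhiMap N n d Δ v) = mwSet N n d Δ v := by
  exact stmt0_general N n d Δ v hcomplex hindep

end
end

section
/- Let N ≥ 2 and let V ∈ ℝ[x_1,…,x_N]. If W and W′ in ℝ[x_0, x_1,…,x_N] both satisfy the three conditions (∂_1 − ∂_0)(∂_2 − ∂_0) W = 0, W|_{x_0=0} = V, and (∂_0 W)|_{x_0=0} = 0, then W = W′. In other words, the solution of this differential equation with these initial conditions is unique. -/
open MvPolynomial

/-- The partial derivative `∂_i`, as a linear endomorphism of `ℝ[x_0,…,x_N]`. -/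
noncomputable def pdOp (N : ℕ) (i : Fin (N + 1)) :
    MvPolynomial (Fin (N + 1)) ℝ →ₗ[ℝ] MvPolynomial (Fin (N + 1)) ℝ :=
  (pderiv i).toLinearMap

/-!
If `∂_i P = ∂_o P` with `i ≠ o` and `P` vanishes at `x_o = 0`, then `∂_o P` has both properties
too, because `∂_i` commutes with `∂_o` and with the substitution `x_o = 0`. So all iterated
`∂_o`-derivatives of `P` vanish at `x_o = 0`, and `P = 0` by Taylor expansion in `x_o`. For the
difference `P` of two solutions this applies first to `(∂_j - ∂_o) P`, which vanishes at `x_o = 0`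
by the two initial conditions, and then to `P` itself.
-/

section CommSemiring

variable {σ R : Type*} [CommSemiring R] {o i : σ}

theorem pderiv_pderiv_comm (i j : σ) (P : MvPolynomial σ R) :
    pderiv i (pderiv j P) = pderiv j (pderiv i P) := by
  induction P using MvPolynomial.induction_on' with
  | add P Q hP hQ => simp only [map_add, hP, hQ]
  | monomial s a =>
    obtain rfl | hij := eq_or_ne i j
    · rfl
    · simp [pderiv_monomial, hij, hij.symm, tsub_right_comm, mul_right_comm]

variable [DecidableEq σ]

/-- The substitution `P ↦ P|_{x_o = 0}`, which restricts initial data to the hyperplane `x_o = 0`;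
its values are kept in the same polynomial ring, so that it can be composed with `pderiv`. -/
noncomputable def substZero (o : σ) : MvPolynomial σ R →ₐ[R] MvPolynomial σ R :=
  aeval fun k => if k = o then 0 else X k

theorem substZero_monomial (o : σ) (s : σ →₀ ℕ) (a : R) :
    substZero o (monomial s a) = if s o = 0 then monomial s a else 0 := by
  rw [substZero, aeval_monomial]
  split_ifs with hs
  · rw [monomial_eq, algebraMap_eq]
    congr 1
    refine Finsupp.prod_congr fun k hk => ?_
    have hko : k ≠ o := by
      rintro rfl
      exact Finsupp.mem_support_iff.mp hk hs
    rw [if_neg hko]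
  · refine mul_eq_zero_of_right _ (Finset.prod_eq_zero (Finsupp.mem_support_iff.mpr hs) ?_)
    simp only [if_true, zero_pow hs]

theorem coeff_substZero (o : σ) (P : MvPolynomial σ R) (m : σ →₀ ℕ) :
    coeff m (substZero o P) = if m o = 0 then coeff m P else 0 := by
  induction P using MvPolynomial.induction_on' with
  | add P Q hP hQ => simp only [map_add, coeff_add, hP, hQ, ite_add_ite, add_zero]
  | monomial s a =>
    rw [substZero_monomial]
    obtain rfl | hsm := eq_or_ne s m
    · split_ifs <;> simp
    · split_ifs <;> simp [coeff_monomial, hsm]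

theorem substZero_pderiv (hi : i ≠ o) (P : MvPolynomial σ R) :
    substZero o (pderiv i P) = pderiv i (substZero o P) := by
  ext m
  simp [coeff_substZero, coeff_pderiv, hi]

theorem eq_zero_of_substZero_iterate_pderiv [IsAddTorsionFree R] {P : MvPolynomial σ R}
    (hP : ∀ n, substZero o ((pderiv o)^[n] P) = 0) : P = 0 := by
  suffices h : ∀ (n : ℕ) (m : σ →₀ ℕ), m o = n → coeff m P = 0 by
    ext m
    simpa using h (m o) m rfl
  intro n
  induction n generalizing P with
  | zero =>
    intro m hm
    simpa [coeff_substZero, hm] using congrArg (coeff m) (hP 0)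
  | succ n ih =>
    intro m hm
    obtain ⟨m, rfl⟩ : ∃ m', m = m' + Finsupp.single o 1 :=
      ⟨m - Finsupp.single o 1, (tsub_add_cancel_of_le (by simp [hm])).symm⟩
    have hmo : m o = n := by simpa using hm
    have hcoeff : coeff m (pderiv o P) = 0 :=
      ih (fun k => by rw [← Function.iterate_succ_apply, hP]) m hmo
    rw [coeff_pderiv, hmo, ← Nat.cast_add_one, mul_comm, ← nsmul_eq_mul] at hcoeff
    exact (nsmul_eq_zero_iff_right n.succ_ne_zero).mp hcoeff

theorem eq_zero_of_pderiv_eq_pderiv [IsAddTorsionFree R] (hi : i ≠ o) {P : MvPolynomial σ R}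
    (hpde : pderiv i P = pderiv o P) (hP : substZero o P = 0) : P = 0 := by
  refine eq_zero_of_substZero_iterate_pderiv (o := o) fun n => ?_
  induction n generalizing P with
  | zero => exact hP
  | succ n ih =>
    have hpde' : pderiv i (pderiv o P) = pderiv o (pderiv o P) := by rw [pderiv_pderiv_comm, hpde]
    have hP' : substZero o (pderiv o P) = 0 := by rw [← hpde, substZero_pderiv hi, hP, map_zero]
    rw [Function.iterate_succ_apply]
    exact ih hpde' hP'

end CommSemiring

/-- The derivation `∂_i - ∂_j`, a first-order factor of the differential equation. -/
noncomputable def pderivSub (R : Type*) {σ : Type*} [CommRing R] (i j : σ) :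
    Derivation R (MvPolynomial σ R) (MvPolynomial σ R) :=
  pderiv i - pderiv j

section CommRing

variable {σ R : Type*} [CommRing R] {o i j : σ}

theorem pderivSub_apply (i j : σ) (P : MvPolynomial σ R) :
    pderivSub R i j P = pderiv i P - pderiv j P :=
  rfl

variable [DecidableEq σ] [IsAddTorsionFree R]

theorem eq_zero_of_pderivSub_pderivSub_eq_zero (hi : i ≠ o) (hj : j ≠ o) {P : MvPolynomial σ R}
    (hpde : pderivSub R i o (pderivSub R j o P) = 0) (hP : substZero o P = 0)
    (hPo : substZero o (pderiv o P) = 0) : P = 0 := by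
  have hinit : substZero o (pderivSub R j o P) = 0 := by
    rw [pderivSub_apply, map_sub, substZero_pderiv hj, hP, hPo, map_zero, sub_zero]
  have hfactor : pderivSub R j o P = 0 :=
    eq_zero_of_pderiv_eq_pderiv hi (sub_eq_zero.mp hpde) hinit
  exact eq_zero_of_pderiv_eq_pderiv hj (sub_eq_zero.mp hfactor) hP

theorem stmt5_general (hi : i ≠ o) (hj : j ≠ o) {W W' : MvPolynomial σ R}
    (hpde : pderivSub R i o (pderivSub R j o W) = pderivSub R i o (pderivSub R j o W'))
    (hval : substZero o W = substZero o W')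
    (hderiv : substZero o (pderiv o W) = substZero o (pderiv o W')) : W = W' := by
  refine sub_eq_zero.mp (eq_zero_of_pderivSub_pderivSub_eq_zero hi hj ?_ ?_ ?_)
  · simp only [map_sub, hpde, sub_self]
  · simp only [map_sub, hval, sub_self]
  · simp only [map_sub, hderiv, sub_self]

end CommRing

theorem pdOp_sub_pdOp_apply (N : ℕ) (i j : Fin (N + 1)) (P : MvPolynomial (Fin (N + 1)) ℝ) :
    (pdOp N i - pdOp N j) P = pderivSub ℝ i j P :=
  rfl

/-- uniqueness of the solution of `(∂_1 − ∂_0)(∂_2 − ∂_0) W = 0` with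
initial conditions `W|_{x_0=0} = V` and `(∂_0 W)|_{x_0=0} = 0` in `ℝ[x_0,…,x_N]`
(`V ∈ ℝ[x_1,…,x_N]` is embedded via `rename Fin.succ`). -/
theorem stmt5 (N : ℕ) (hN : 2 ≤ N) (V : MvPolynomial (Fin N) ℝ)
    (W W' : MvPolynomial (Fin (N + 1)) ℝ)
    (hW1 : (pdOp N ⟨1, by omega⟩ - pdOp N 0) ((pdOp N ⟨2, by omega⟩ - pdOp N 0) W) = 0)
    (hW2 : aeval (fun k : Fin (N + 1) => if k = 0 then 0 else X k) W = rename Fin.succ V)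
    (hW3 : aeval (fun k : Fin (N + 1) =>
        if k = 0 then 0 else (X k : MvPolynomial (Fin (N + 1)) ℝ))
      (pderiv (0 : Fin (N + 1)) W) = 0)
    (hW'1 : (pdOp N ⟨1, by omega⟩ - pdOp N 0) ((pdOp N ⟨2, by omega⟩ - pdOp N 0) W') = 0)
    (hW'2 : aeval (fun k : Fin (N + 1) => if k = 0 then 0 else X k) W' = rename Fin.succ V)
    (hW'3 : aeval (fun k : Fin (N + 1) =>
        if k = 0 then 0 else (X k : MvPolynomial (Fin (N + 1)) ℝ))
      (pderiv (0 : Fin (N + 1)) W') = 0) :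
    W = W' := by
  simp only [pdOp_sub_pdOp_apply] at hW1 hW'1
  exact stmt5_general (by simp [Fin.ext_iff]) (by simp [Fin.ext_iff]) (hW1.trans hW'1.symm)
    (hW2.trans hW'2.symm) (hW3.trans hW'3.symm)
end
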